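/- Let R be a supercommutative superalgebra over ℚ, let R((x))[φ] be the superalgebra of formal Laurent series in x (finitely many negative powers) together with the odd variable φ, and let T = −Σ_{j≥1}(A_j L_j(x,φ) + M_{j−1/2} G_{j−1/2}(x,φ)) with (A_j)_{j≥1} in R⁰ and (M_{j−1/2})_{j≥1} in R¹ (see context). Set (x̃, φ̃) = (exp(T)(x), exp(T)(φ)). Then x̃ is invertible in R((x))[φ], and for every H̄ ∈ R((x))[φ] the substitution H̄(x̃, φ̃) (defined in the context) is coefficientwise well defined and satisfies H̄(x̃, φ̃) = exp(T)(H̄). -/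

import Mathlib

/- A supercommutative superalgebra over `ℚ` is encoded as a `ℚ`-algebra `R` together with its
grading involution `σ : R →+* R` (`σ = id` on `R⁰`, `σ = −id` on `R¹`; over `ℚ` the data of
the direct sum decomposition `R = R⁰ ⊕ R¹` is equivalent to that of `σ`), with
supercommutativity expressed by: even elements are central, and odd elements anticommute.

An element `a + φb` of `R((x))[φ]` is encoded as the pair `(a, b)` of its coefficient
functions `ℤ → R`; membership in `R((x))` corresponds to the support being bounded below. -/

noncomputable section

/-- Elements `a + φ b` of `R((x))[φ]`, encoded as pairs of coefficient functions. -/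
abbrev SLS (R : Type*) := (ℤ → R) × (ℤ → R)

variable {R : Type*} [Ring R] [Algebra ℚ R]

/-- Support bounded below: finitely many negative powers of `x`. -/
def SuppBddBelow (a : ℤ → R) : Prop := ∃ N : ℤ, ∀ n : ℤ, n < N → a n = 0

/-- Convolution product of coefficient functions. -/
def conv (a b : ℤ → R) : ℤ → R := fun n => ∑ᶠ k : ℤ, a k * b (n - k)

/-- The product `(a + φb)(c + φd) = ac + φ(σ(a)d + bc)` of `R((x))[φ]`. -/
def slsMul (σ : R →+* R) (u v : SLS R) : SLS R :=
  (conv u.1 v.1, conv (fun k => σ (u.1 k)) v.2 + conv u.2 v.1)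

/-- The unit `1` of `R((x))[φ]`. -/
def slsOne : SLS R := (fun n => if n = 0 then 1 else 0, 0)

/-- The element `x` of `R((x))[φ]`. -/
def slsX : SLS R := (fun n => if n = 1 then 1 else 0, 0)

/-- The element `φ` of `R((x))[φ]`. -/
def slsPhi : SLS R := (0, fun n => if n = 0 then 1 else 0)

/-- Powers in `R((x))[φ]`. -/
def slsPow (σ : R →+* R) (u : SLS R) : ℕ → SLS R
  | 0 => slsOne
  | k + 1 => slsMul σ u (slsPow σ u k)

/-- Left multiplication by the scalar `r ∈ R`: `r(a + φb) = ra + φσ(r)b`. -/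
def slsSmulL (σ : R →+* R) (r : R) (u : SLS R) : SLS R :=
  (fun n => r * u.1 n, fun n => σ r * u.2 n)

/-- Coefficientwise sum of a `ℤ`-indexed family of elements of `R((x))[φ]`. -/
def slsSumZ (f : ℤ → SLS R) : SLS R :=
  (fun m => ∑ᶠ n : ℤ, (f n).1 m, fun m => ∑ᶠ n : ℤ, (f n).2 m)

/-- `Xⁿ` for `n ∈ ℤ`, where `Y` denotes the inverse of `X`. -/
def slsZPow (σ : R →+* R) (X Y : SLS R) (n : ℤ) : SLS R :=
  if 0 ≤ n then slsPow σ X n.toNat else slsPow σ Y (-n).toNat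

/-- Substitution of the pair `(X, Φ)` for `(x, φ)` in `u = Σ_{n∈ℤ} aₙxⁿ + φΣ_{n∈ℤ} bₙxⁿ`:
`u(X, Φ) = Σ_{n∈ℤ} aₙ Xⁿ + Φ·Σ_{n∈ℤ} bₙ Xⁿ`, coefficientwise, where `Y = X⁻¹` is used for
the negative powers of `X`. -/
def slsSubst (σ : R →+* R) (u X Y Φ : SLS R) : SLS R :=
  slsSumZ (fun n => slsSmulL σ (u.1 n) (slsZPow σ X Y n))
    + slsMul σ Φ (slsSumZ fun n => slsSmulL σ (u.2 n) (slsZPow σ X Y n))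

/-- The operator `T = −Σ_{j≥1}(A_j L_j(x,φ) + M_{j−1/2} G_{j−1/2}(x,φ))`, concretely
`T(a, b) = (Σ_{j≥1} A_j x^(j+1) a′ + Σ_{j≥1} M_{j−1/2} xʲ b,
Σ_{j≥1} A_j (x^(j+1) b′ + ((j+1)/2) xʲ b) + Σ_{j≥1} M_{j−1/2} xʲ a′)`, written
coefficientwise (the summation index is shifted so that `j + 1` ranges over `j ≥ 1`;
`M j` stands for `M_{j−1/2}`). -/
def slsT (A M : ℕ → R) (u : SLS R) : SLS R :=
  (fun n => ∑ᶠ j : ℕ,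
      (A (j + 1) * ((n - ((j : ℤ) + 1)) • u.1 (n - ((j : ℤ) + 1)))
        + M (j + 1) * u.2 (n - ((j : ℤ) + 1))),
   fun n => ∑ᶠ j : ℕ,
      (A (j + 1) * ((n - ((j : ℤ) + 1)) • u.2 (n - ((j : ℤ) + 1))
          + (((j : ℚ) + 2) / 2) • u.2 (n - ((j : ℤ) + 1)))
        + M (j + 1) * ((n - (j : ℤ)) • u.1 (n - (j : ℤ)))))

/-- `exp(T)(u) = Σ_{k≥0} Tᵏ(u)/k!`, coefficientwise. -/
def slsExp (A M : ℕ → R) (u : SLS R) : SLS R :=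
  (fun n => ∑ᶠ k : ℕ, (k.factorial : ℚ)⁻¹ • (((slsT A M)^[k]) u).1 n,
   fun n => ∑ᶠ k : ℕ, (k.factorial : ℚ)⁻¹ • (((slsT A M)^[k]) u).2 n)

namespace SLSAux
set_option linter.unusedSectionVars false
open HahnSeries

/-- Laurent series over `R`. -/
abbrev LS (R : Type*) [Ring R] := HahnSeries ℤ R

theorem ls_bdd (x : LS R) : ∃ N : ℤ, ∀ n < N, x.coeff n = 0 :=
  ⟨x.order, fun _ h => coeff_eq_zero_of_lt_order h⟩

/-- Laurent series from a bounded below function. -/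
def mk (a : ℤ → R) (h : SuppBddBelow a) : LS R :=
  ofSuppBddBelow a (by
    obtain ⟨N, hN⟩ := h
    exact ⟨N, fun n hn => by by_contra h; exact hn (hN n (by omega))⟩)

@[simp] theorem mk_coeff (a : ℤ → R) (h : SuppBddBelow a) (n : ℤ) : (mk a h).coeff n = a n := rfl

theorem mul_coeff (x y : LS R) (n : ℤ) :
    (x * y).coeff n = ∑ᶠ k : ℤ, x.coeff k * y.coeff (n - k) := by
  rw [coeff_mul]
  rw [finsum_eq_sum_of_support_subset (s := (Finset.antidiagonal x.isPWO_support y.isPWO_support n).image Prod.fst)]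
  · rw [Finset.sum_image]
    · refine Finset.sum_congr rfl fun ij h => ?_
      rw [Finset.mem_antidiagonal] at h
      rw [← h.2.2]; simp
    · rintro ⟨i, j⟩ h ⟨i', j'⟩ h' e
      simp only [Finset.mem_coe, Finset.mem_antidiagonal] at h h' e
      have := h.2.2; have := h'.2.2
      ext <;> simp <;> omega
  · intro k hk
    simp only [Function.mem_support] at hk
    simp only [Finset.coe_image, Set.mem_image, Finset.mem_coe, Finset.mem_antidiagonal]
    refine ⟨(k, n - k), ⟨?_, ?_, by simp⟩, rfl⟩
    · intro h; apply hk; simp [h]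
    · intro h; apply hk; simp [h]

theorem mul_coeff_zero {x y : LS R} {N P n : ℤ} (hx : ∀ k < N, x.coeff k = 0)
    (hy : ∀ k < P, y.coeff k = 0) (hn : n < N + P) : (x * y).coeff n = 0 := by
  rw [mul_coeff]
  refine finsum_eq_zero_of_forall_eq_zero fun k => ?_
  by_cases h : k < N
  · simp [hx k h]
  · rw [hy (n - k) (by omega), mul_zero]

/-- coefficientwise grading involution -/
def sg (σ : R →+* R) : LS R →+* LS R where
  toFun x := x.map σ
  map_one' := HahnSeries.map_one σ.toMonoidWithZeroHom
  map_mul' _ _ := HahnSeries.map_mul (σ : R →ₙ+* R)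
  map_zero' := by ext; simp
  map_add' _ _ := by ext; simp

@[simp] theorem sg_coeff (σ : R →+* R) (x : LS R) (n : ℤ) : (sg σ x).coeff n = σ (x.coeff n) := rfl

theorem sg_smul (σ : R →+* R) (q : ℚ) (x : LS R) : sg σ (q • x) = q • sg σ x :=
  map_rat_smul (sg σ) q x

/-- Euler derivation -/
def th : LS R →ₗ[ℚ] LS R where
  toFun x := mk (fun n => n • x.coeff n) (by
    obtain ⟨N, hN⟩ := ls_bdd x
    exact ⟨N, fun n h => by simp [hN n h]⟩)
  map_add' x y := by ext; simp
  map_smul' q x := by ext n; simp only [mk_coeff, coeff_smul, RingHom.id_apply]; rw [smul_comm]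

@[simp] theorem th_coeff (x : LS R) (n : ℤ) : (th x).coeff n = n • x.coeff n := rfl

theorem supp_fin (x y : LS R) (n : ℤ) : (Function.support fun k => x.coeff k * y.coeff (n - k)).Finite := by
  obtain ⟨N, hN⟩ := ls_bdd x
  obtain ⟨P, hP⟩ := ls_bdd y
  refine (Set.finite_Icc N (n - P)).subset fun k hk => ?_
  simp only [Function.mem_support] at hk
  constructor
  · by_contra h; apply hk; rw [hN k (by omega), zero_mul]
  · by_contra h; apply hk; rw [hP (n - k) (by omega), mul_zero]

theorem th_mul (x y : LS R) : th (x * y) = th x * y + x * th y := by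
  ext n
  simp only [th_coeff, mul_coeff, coeff_add]
  rw [smul_finsum' n (supp_fin x y n), ← finsum_add_distrib]
  · refine finsum_congr fun k => ?_
    simp only [zsmul_eq_mul, ← mul_assoc, ← (Int.cast_commute (n - k) (x.coeff k)).eq]
    rw [← add_mul, ← add_mul]
    push_cast; simp
  · exact supp_fin (th x) y n
  · exact supp_fin x (th y) n

theorem th_sg (σ : R →+* R) (x : LS R) : th (sg σ x) = sg σ (th x) := by
  ext n; simp

theorem swap_mul (τ : R →+* R) (f g : LS R) (h : ∀ i j, g.coeff i * f.coeff j = f.coeff j * τ (g.coeff i)) :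
    g * f = f * sg τ g := by
  ext n
  rw [mul_coeff, mul_coeff, ← finsum_comp_equiv (Equiv.subLeft n)]
  refine finsum_congr fun k => ?_
  simp [h]

/-- series with coefficients `g`, starting in degree `s` -/
def ser (s : ℤ) (g : ℕ → R) : LS R :=
  mk (fun n => if s ≤ n then g (n - s).toNat else 0) ⟨s, fun n h => if_neg (by omega)⟩

theorem ser_coeff (s : ℤ) (g : ℕ → R) (n : ℤ) :
    (ser s g).coeff n = if s ≤ n then g (n - s).toNat else 0 := rfl

theorem ser_mul_coeff (s : ℤ) (g : ℕ → R) (y : LS R) (n : ℤ) :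
    (ser s g * y).coeff n = ∑ᶠ j : ℕ, g j * y.coeff (n - ((j : ℤ) + s)) := by
  rw [mul_coeff]
  have inj : Function.Injective (fun j : ℕ => (j : ℤ) + s) := fun a b h => by simpa using h
  have e := finsum_mem_range (f := fun k => (ser s g).coeff k * y.coeff (n - k)) inj
  trans ∑ᶠ k ∈ Set.range (fun j : ℕ => (j : ℤ) + s), (ser s g).coeff k * y.coeff (n - k)
  · refine finsum_congr fun k => ?_
    by_cases h : k ∈ Set.range (fun j : ℕ => (j : ℤ) + s)
    · simp only [h, finsum_true]
    · simp only [h, finsum_false]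
      rw [ser_coeff, if_neg, zero_mul]
      intro h'
      exact h ⟨(k - s).toNat, by simp; omega⟩
  · rw [e]
    refine finsum_congr fun j => ?_
    simp [ser_coeff]

theorem ser_fin (s : ℤ) (g : ℕ → R) (y : LS R) (n : ℤ) :
    (Function.support fun j : ℕ => g j * y.coeff (n - ((j : ℤ) + s))).Finite := by
  obtain ⟨P, hP⟩ := ls_bdd y
  refine (Set.finite_Iic (n - s - P).toNat).subset fun k hk => ?_
  simp only [Function.mem_support] at hk
  by_contra h
  simp only [Set.mem_Iic] at h
  apply hk
  rw [hP _ (by omega), mul_zero]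

theorem ser_low (s : ℤ) (g : ℕ → R) (n : ℤ) (h : n < s) : (ser s g).coeff n = 0 := by
  rw [ser_coeff, if_neg (by omega)]


/-- Pairs `a + φ b` with honest Laurent series. -/
abbrev PV (R : Type*) [Ring R] := LS R × LS R

/-- coefficient functions -/
def tf (u : PV R) : SLS R := (u.1.coeff, u.2.coeff)

/-- product -/
def mu (σ : R →+* R) : PV R →ₗ[ℚ] PV R →ₗ[ℚ] PV R :=
  LinearMap.mk₂ ℚ (fun u v => (u.1 * v.1, sg σ u.1 * v.2 + u.2 * v.1))
    (by intros; ext1 <;> simp [add_mul]; abel)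
    (by intros; ext1 <;> simp [sg_smul])
    (by intros; ext1 <;> simp [mul_add]; abel)
    (by intros; ext1 <;> simp)

theorem mu_apply (σ : R →+* R) (u v : PV R) :
    mu σ u v = (u.1 * v.1, sg σ u.1 * v.2 + u.2 * v.1) := rfl

theorem tf_mu (σ : R →+* R) (u v : PV R) : tf (mu σ u v) = slsMul σ (tf u) (tf v) := by
  ext n
  · simp [tf, mu_apply, slsMul, conv, mul_coeff]
  · simp [tf, mu_apply, slsMul, conv, mul_coeff]

/-- the operator `T` -/
def TT (A M : ℕ → R) : PV R →ₗ[ℚ] PV R where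
  toFun u := (ser 1 (fun j => A (j + 1)) * th u.1 + ser 1 (fun j => M (j + 1)) * u.2,
    ser 1 (fun j => A (j + 1)) * th u.2 + ser 1 (fun j => (((j : ℚ) + 2) / 2) • A (j + 1)) * u.2
      + ser 0 (fun j => M (j + 1)) * th u.1)
  map_add' u v := by ext1 <;> simp [mul_add] <;> abel
  map_smul' q u := by ext1 <;> simp

theorem TT_apply (A M : ℕ → R) (u : PV R) : TT A M u =
  (ser 1 (fun j => A (j + 1)) * th u.1 + ser 1 (fun j => M (j + 1)) * u.2,
    ser 1 (fun j => A (j + 1)) * th u.2 + ser 1 (fun j => (((j : ℚ) + 2) / 2) • A (j + 1)) * u.2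
      + ser 0 (fun j => M (j + 1)) * th u.1) := rfl

theorem tf_TT (A M : ℕ → R) (u : PV R) : tf (TT A M u) = slsT A M (tf u) := by
  ext n
  · simp only [tf, TT_apply, slsT, coeff_add, ser_mul_coeff]
    rw [← finsum_add_distrib (ser_fin _ _ _ _) (ser_fin _ _ _ _)]
    rfl
  · simp only [tf, TT_apply, slsT, coeff_add, ser_mul_coeff]
    rw [← finsum_add_distrib (ser_fin _ _ _ _) (ser_fin _ _ _ _),
      ← finsum_add_distrib _ (ser_fin _ _ _ _)]
    · refine finsum_congr fun j => ?_
      simp only [th_coeff, mul_add, add_zero]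
      rw [smul_mul_assoc, mul_smul_comm (((j : ℚ) + 2) / 2)]
    · exact ((ser_fin _ _ _ _).union (ser_fin _ _ _ _)).subset (Function.support_add _ _)

theorem tf_iter (A M : ℕ → R) (k : ℕ) (u : PV R) :
    tf ((TT A M ^ k) u) = (slsT A M)^[k] (tf u) := by
  induction k with
  | zero => rfl
  | succ k ih => rw [pow_succ', Function.iterate_succ_apply', ← ih, ← tf_TT]; rfl

section
variable (σ : R →+* R) (hσ : ∀ r : R, σ (σ r) = r)
    (hcomm : ∀ u v : R, σ u = u → u * v = v * u)
    (hanti : ∀ u v : R, σ u = -u → σ v = -v → u * v = -(v * u))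

theorem sigma_smul (q : ℚ) (r : R) : σ (q • r) = q • σ r := map_rat_smul σ q r

theorem sg_ser (s : ℤ) (g : ℕ → R) : sg σ (ser s g) = ser s (fun j => σ (g j)) := by
  ext n
  simp only [sg_coeff, ser_coeff]
  split_ifs <;> simp

theorem ser_central (s : ℤ) (g : ℕ → R) (hg : ∀ j, σ (g j) = g j)
    (hcomm : ∀ u v : R, σ u = u → u * v = v * u) (y : LS R) : y * ser s g = ser s g * y := by
  have := swap_mul (RingHom.id R) (ser s g) y (by
    intro i j
    rw [ser_coeff]
    split_ifs
    · exact (hcomm _ _ (hg _)).symm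
    · simp)
  rw [this]; congr 1

theorem odd_swap (hσ : ∀ r : R, σ (σ r) = r)
    (hcomm : ∀ u v : R, σ u = u → u * v = v * u)
    (hanti : ∀ u v : R, σ u = -u → σ v = -v → u * v = -(v * u))
    (m r : R) (hm : σ m = -m) : r * m = m * σ r := by
  have h1 := hcomm (r + σ r) m (by rw [map_add, hσ]; abel)
  have h2 := hanti (r - σ r) m (by rw [map_sub, hσ]; abel) hm
  have h3 : (2 : ℚ) • (r * m) = (2 : ℚ) • (m * σ r) := by
    rw [two_smul, two_smul]
    have : r * m + r * m = (r + σ r) * m + (r - σ r) * m := by noncomm_ring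
    rw [this, h1, h2]; noncomm_ring
  exact smul_right_injective R (two_ne_zero (α := ℚ)) h3

theorem ser_odd (hσ : ∀ r : R, σ (σ r) = r)
    (hcomm : ∀ u v : R, σ u = u → u * v = v * u)
    (hanti : ∀ u v : R, σ u = -u → σ v = -v → u * v = -(v * u))
    (s : ℤ) (g : ℕ → R) (hg : ∀ j, σ (g j) = -(g j)) (y : LS R) :
    y * ser s g = ser s g * sg σ y := by
  refine swap_mul σ (ser s g) y (fun i j => ?_)
  rw [ser_coeff]
  split_ifs
  · exact odd_swap σ hσ hcomm hanti _ _ (hg _)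
  · simp

theorem TT_mu (hσ : ∀ r : R, σ (σ r) = r)
    (hcomm : ∀ u v : R, σ u = u → u * v = v * u)
    (hanti : ∀ u v : R, σ u = -u → σ v = -v → u * v = -(v * u))
    (A M : ℕ → R) (hA : ∀ j, σ (A j) = A j) (hM : ∀ j, σ (M j) = -(M j)) (u v : PV R) :
    TT A M (mu σ u v) = mu σ (TT A M u) v + mu σ u (TT A M v) := by
  obtain ⟨a, b⟩ := u
  obtain ⟨c, d⟩ := v
  simp only [TT_apply, mu_apply]
  have cA := ser_central σ 1 (fun j => A (j + 1)) (fun j => hA _) hcomm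
  have cB := ser_central σ 1 (fun j => (((j : ℚ) + 2) / 2) • A (j + 1))
    (fun j => by rw [sigma_smul, hA]) hcomm
  have cM := ser_odd σ hσ hcomm hanti 1 (fun j => M (j + 1)) (fun j => hM _)
  have cN := ser_odd σ hσ hcomm hanti 0 (fun j => M (j + 1)) (fun j => hM _)
  have sA : sg σ (ser 1 (fun j => A (j + 1))) = ser 1 (fun j => A (j + 1)) := by
    rw [sg_ser]; simp only [hA]
  have sM : sg σ (ser 1 (fun j => M (j + 1))) = - ser 1 (fun j => M (j + 1)) := by
    rw [sg_ser]; ext n; simp only [hM, coeff_neg, ser_coeff]; split_ifs <;> simp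
  have ss : sg σ (sg σ a) = a := by ext n; simp [hσ]
  generalize ser 1 (fun j => A (j + 1)) = P at *
  generalize ser 1 (fun j => (((j : ℚ) + 2) / 2) • A (j + 1)) = B at *
  generalize ser 1 (fun j => M (j + 1)) = Q at *
  generalize ser 0 (fun j => M (j + 1)) = N at *
  ext1
  · simp only [th_mul, Prod.fst_add, mul_add, add_mul, ← mul_assoc, cA, cM]
    abel
  · simp only [th_mul, map_add, map_mul, Prod.snd_add, mul_add, add_mul, ← mul_assoc, cA, cM, cB, cN, sA, sM, ss, th_sg, neg_mul]
    abel

end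

/-- weight filtration -/
def FF (R : Type*) [Ring R] [Algebra ℚ R] (w : ℤ) : Submodule ℚ (PV R) where
  carrier := {u | (∀ n : ℤ, 2 * n < w → u.1.coeff n = 0) ∧ ∀ n : ℤ, 2 * n + 1 < w → u.2.coeff n = 0}
  add_mem' := by
    rintro u v ⟨h1, h2⟩ ⟨h3, h4⟩
    exact ⟨fun n h => by simp [h1 n h, h3 n h], fun n h => by simp [h2 n h, h4 n h]⟩
  zero_mem' := by simp
  smul_mem' := by
    rintro q u ⟨h1, h2⟩
    exact ⟨fun n h => by simp [h1 n h], fun n h => by simp [h2 n h]⟩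

theorem mem_FF (w : ℤ) (u : PV R) : u ∈ FF R w ↔
    (∀ n : ℤ, 2 * n < w → u.1.coeff n = 0) ∧ ∀ n : ℤ, 2 * n + 1 < w → u.2.coeff n = 0 := Iff.rfl

theorem FF_mono {w w' : ℤ} (h : w ≤ w') {u : PV R} (hu : u ∈ FF R w') : u ∈ FF R w :=
  ⟨fun n hn => hu.1 n (by omega), fun n hn => hu.2 n (by omega)⟩

theorem exists_FF (u : PV R) : ∃ w, u ∈ FF R w := by
  obtain ⟨N, hN⟩ := ls_bdd u.1
  obtain ⟨P, hP⟩ := ls_bdd u.2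
  exact ⟨2 * min N P, fun n h => hN n (by omega), fun n h => hP n (by omega)⟩

theorem eq_zero_of_FF {u : PV R} (w : ℤ) (h : ∀ K : ℕ, u ∈ FF R (w + K)) : u = 0 := by
  ext n
  · exact (h (2 * n + 1 - w).toNat).1 n (by omega)
  · exact (h (2 * n + 2 - w).toNat).2 n (by omega)

theorem mul_coeff_half {x y : LS R} {c d w n : ℤ} (hx : ∀ k, 2 * k < c → x.coeff k = 0)
    (hy : ∀ k, 2 * k < d → y.coeff k = 0) (hw : w ≤ c + d) (hn : 2 * n < w) : (x * y).coeff n = 0 := by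
  rw [mul_coeff]
  refine finsum_eq_zero_of_forall_eq_zero fun k => ?_
  by_cases h : 2 * k < c
  · simp [hx k h]
  · rw [hy (n - k) (by omega), mul_zero]

theorem mu_FF (σ : R →+* R) {w w' : ℤ} {u v : PV R} (hu : u ∈ FF R w) (hv : v ∈ FF R w') :
    mu σ u v ∈ FF R (w + w') := by
  have hu2 : ∀ k, 2 * k < w - 1 → u.2.coeff k = 0 := fun k h => hu.2 k (by omega)
  have hv2 : ∀ k, 2 * k < w' - 1 → v.2.coeff k = 0 := fun k h => hv.2 k (by omega)
  have hs : ∀ k, 2 * k < w → (sg σ u.1).coeff k = 0 := fun k h => by simp [hu.1 k h]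
  refine ⟨fun n h => mul_coeff_half hu.1 hv.1 le_rfl h, fun n h => ?_⟩
  rw [mu_apply, coeff_add, mul_coeff_half hs hv2 (w := w + w' - 1) (by omega) (by omega),
    mul_coeff_half hu2 hv.1 (w := w + w' - 1) (by omega) (by omega), add_zero]

theorem TT_FF (A M : ℕ → R) {w : ℤ} {u : PV R} (hu : u ∈ FF R w) : TT A M u ∈ FF R (w + 1) := by
  have hu2 : ∀ k, 2 * k < w - 1 → u.2.coeff k = 0 := fun k h => hu.2 k (by omega)
  have h1 : ∀ k, 2 * k < w → (th u.1).coeff k = 0 := fun k h => by simp [hu.1 k h]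
  have h2 : ∀ k, 2 * k < w - 1 → (th u.2).coeff k = 0 := fun k h => by simp [hu2 k h]
  have s1 : ∀ g : ℕ → R, ∀ k, 2 * k < 2 → (ser 1 g).coeff k = 0 := fun g k h => ser_low _ _ _ (by omega)
  have s0 : ∀ g : ℕ → R, ∀ k, 2 * k < 0 → (ser 0 g).coeff k = 0 := fun g k h => ser_low _ _ _ (by omega)
  refine ⟨fun n h => ?_, fun n h => ?_⟩
  · rw [TT_apply, coeff_add, mul_coeff_half (s1 _) h1 (w := w + 1) (by omega) (by omega),
      mul_coeff_half (s1 _) hu2 (w := w + 1) (by omega) (by omega), add_zero]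
  · rw [TT_apply, coeff_add, coeff_add, mul_coeff_half (s1 _) h2 (w := w) (by omega) (by omega),
      mul_coeff_half (s1 _) hu2 (w := w) (by omega) (by omega),
      mul_coeff_half (s0 _) h1 (w := w) (by omega) (by omega), add_zero, add_zero]

theorem TT_pow_FF (A M : ℕ → R) {w : ℤ} {u : PV R} (hu : u ∈ FF R w) (k : ℕ) :
    (TT A M ^ k) u ∈ FF R (w + k) := by
  induction k with
  | zero => simpa using hu
  | succ k ih =>
    rw [pow_succ']
    have := TT_FF A M ih
    push_cast
    rw [← add_assoc]
    exact this

/-- truncated exponential -/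
def EK (A M : ℕ → R) (K : ℕ) : PV R →ₗ[ℚ] PV R :=
  ∑ k ∈ Finset.range K, (k.factorial : ℚ)⁻¹ • TT A M ^ k

theorem EK_apply (A M : ℕ → R) (K : ℕ) (u : PV R) :
    EK A M K u = ∑ k ∈ Finset.range K, (k.factorial : ℚ)⁻¹ • (TT A M ^ k) u := by
  simp [EK, LinearMap.sum_apply]

/-- coefficient maps -/
def c1 (n : ℤ) : PV R →ₗ[ℚ] R where
  toFun u := u.1.coeff n
  map_add' _ _ := by simp
  map_smul' _ _ := by simp

/-- coefficient maps -/
def c2 (n : ℤ) : PV R →ₗ[ℚ] R where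
  toFun u := u.2.coeff n
  map_add' _ _ := by simp
  map_smul' _ _ := by simp

theorem exp_coeff1 (A M : ℕ → R) {w : ℤ} {u : PV R} (hu : u ∈ FF R w) (K : ℕ) (n : ℤ)
    (h : 2 * n < w + K) : (slsExp A M (tf u)).1 n = (EK A M K u).1.coeff n := by
  change _ = c1 n (EK A M K u)
  rw [EK_apply, map_sum]
  simp only [slsExp, ← tf_iter]
  rw [finsum_eq_sum_of_support_subset (s := Finset.range K)]
  · simp only [map_smul]; rfl
  · intro k hk
    simp only [Function.mem_support] at hk
    simp only [Finset.coe_range, Set.mem_Iio]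
    by_contra h'
    apply hk
    have := (TT_pow_FF A M hu k).1 n (by omega)
    simp [tf, this]

theorem exp_coeff2 (A M : ℕ → R) {w : ℤ} {u : PV R} (hu : u ∈ FF R w) (K : ℕ) (n : ℤ)
    (h : 2 * n + 1 < w + K) : (slsExp A M (tf u)).2 n = (EK A M K u).2.coeff n := by
  change _ = c2 n (EK A M K u)
  rw [EK_apply, map_sum]
  simp only [slsExp, ← tf_iter]
  rw [finsum_eq_sum_of_support_subset (s := Finset.range K)]
  · simp only [map_smul]; rfl
  · intro k hk
    simp only [Function.mem_support] at hk
    simp only [Finset.coe_range, Set.mem_Iio]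
    by_contra h'
    apply hk
    have := (TT_pow_FF A M hu k).2 n (by omega)
    simp [tf, this]

theorem exists_E (A M : ℕ → R) (u : PV R) : ∃ e : PV R, tf e = slsExp A M (tf u) := by
  obtain ⟨w, hw⟩ := exists_FF u
  refine ⟨(mk (slsExp A M (tf u)).1 ⟨w / 2, fun n h => ?_⟩, mk (slsExp A M (tf u)).2 ⟨w / 2 - 1, fun n h => ?_⟩), rfl⟩
  · rw [exp_coeff1 A M hw 0 n (by simp; omega)]; simp [EK_apply]
  · rw [exp_coeff2 A M hw 0 n (by simp; omega)]; simp [EK_apply]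

/-- the exponential -/
def E (A M : ℕ → R) (u : PV R) : PV R := (exists_E A M u).choose

theorem tf_E (A M : ℕ → R) (u : PV R) : tf (E A M u) = slsExp A M (tf u) := (exists_E A M u).choose_spec

theorem E_sub (A M : ℕ → R) {w : ℤ} {u : PV R} (hu : u ∈ FF R w) (K : ℕ) :
    E A M u - EK A M K u ∈ FF R (w + K) := by
  refine ⟨fun n h => ?_, fun n h => ?_⟩
  · have := exp_coeff1 A M hu K n h
    rw [← tf_E] at this
    simp only [Prod.fst_sub, coeff_sub]
    rw [sub_eq_zero]; exact this
  · have := exp_coeff2 A M hu K n h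
    rw [← tf_E] at this
    simp only [Prod.snd_sub, coeff_sub]
    rw [sub_eq_zero]; exact this

theorem E_FF (A M : ℕ → R) {w : ℤ} {u : PV R} (hu : u ∈ FF R w) : E A M u ∈ FF R w := by
  simpa [EK_apply] using E_sub A M hu 0

theorem E_add (A M : ℕ → R) (u v : PV R) : E A M (u + v) = E A M u + E A M v := by
  obtain ⟨w, hw⟩ := exists_FF u
  obtain ⟨w', hw'⟩ := exists_FF v
  have h1 := FF_mono (min_le_left w w') hw
  have h2 := FF_mono (min_le_right w w') hw'
  rw [← sub_eq_zero]
  refine eq_zero_of_FF (min w w') fun K => ?_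
  have := sub_mem (sub_mem (E_sub A M (add_mem h1 h2) K) (E_sub A M h1 K)) (E_sub A M h2 K)
  rw [map_add] at this
  convert this using 1
  abel

/-- the exponential as an additive map -/
def EA (A M : ℕ → R) : PV R →+ PV R := AddMonoidHom.mk' (E A M) (E_add A M)

theorem E_of_TT_zero (A M : ℕ → R) (u : PV R) (h : TT A M u = 0) : E A M u = u := by
  obtain ⟨w, hw⟩ := exists_FF u
  rw [← sub_eq_zero]
  refine eq_zero_of_FF (w + 1) fun K => ?_
  have := E_sub A M hw (K + 1)
  have e : EK A M (K + 1) u = u := by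
    rw [EK_apply, Finset.sum_range_succ', Finset.sum_eq_zero]
    · simp
    · intro k _
      rw [pow_succ]
      simp [h]
  rw [e] at this
  push_cast at this
  convert this using 2
  ring

theorem leib (σ : R →+* R) (A M : ℕ → R)
    (hT : ∀ u v, TT A M (mu σ u v) = mu σ (TT A M u) v + mu σ u (TT A M v)) (u v : PV R) (k : ℕ) :
    (k.factorial : ℚ)⁻¹ • (TT A M ^ k) (mu σ u v) = ∑ ij ∈ Finset.HasAntidiagonal.antidiagonal k,
      mu σ ((ij.1.factorial : ℚ)⁻¹ • (TT A M ^ ij.1) u) ((ij.2.factorial : ℚ)⁻¹ • (TT A M ^ ij.2) v) := by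
  have key : (TT A M ^ k) (mu σ u v) = ∑ ij ∈ Finset.HasAntidiagonal.antidiagonal k,
      k.choose ij.1 • mu σ ((TT A M ^ ij.1) u) ((TT A M ^ ij.2) v) := by
    induction k with
    | zero => simp
    | succ k ih =>
      rw [Finset.sum_antidiagonal_choose_succ_nsmul
        (f := fun i j => mu σ ((TT A M ^ i) u) ((TT A M ^ j) v))]
      rw [pow_succ', Module.End.mul_apply, ih, map_sum, ← Finset.sum_add_distrib]
      refine Finset.sum_congr rfl fun ij h => ?_
      rw [map_nsmul, hT, smul_add, add_comm]
      have : k.choose ij.1 = k.choose ij.2 := by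
        rw [Finset.HasAntidiagonal.mem_antidiagonal] at h
        rw [← h, Nat.choose_symm_add]
      simp only [pow_succ', Module.End.mul_apply, this]
  rw [key, Finset.smul_sum]
  refine Finset.sum_congr rfl fun ij h => ?_
  rw [Finset.HasAntidiagonal.mem_antidiagonal] at h
  rw [← Nat.cast_smul_eq_nsmul ℚ, smul_smul, map_smul, LinearMap.map_smul₂, smul_smul]
  congr 1
  subst h
  have := Nat.add_choose_mul_factorial_mul_factorial ij.1 ij.2
  rw [← Nat.choose_symm_add] at this
  have h1 := Nat.factorial_ne_zero ij.1
  have h2 := Nat.factorial_ne_zero ij.2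
  have h3 := Nat.factorial_ne_zero (ij.1 + ij.2)
  rw [← this] at h3 ⊢
  have h4 : (ij.1 + ij.2).choose ij.1 ≠ 0 := by
    intro h; simp [h] at h3
  push_cast
  field_simp

theorem E_mu (σ : R →+* R) (A M : ℕ → R)
    (hT : ∀ u v, TT A M (mu σ u v) = mu σ (TT A M u) v + mu σ u (TT A M v)) (u v : PV R) :
    E A M (mu σ u v) = mu σ (E A M u) (E A M v) := by
  obtain ⟨w, hu⟩ := exists_FF u
  obtain ⟨w', hv⟩ := exists_FF v
  rw [← sub_eq_zero]
  refine eq_zero_of_FF (w + w') fun K => ?_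
  have h1 := E_sub A M (mu_FF σ hu hv) K
  have h2 := mu_FF σ (E_sub A M hu K) (E_FF A M hv)
  have hek : EK A M K u ∈ FF R w := by
    have := sub_mem (E_FF A M hu) (FF_mono (by omega) (E_sub A M hu K))
    simpa using this
  have h3 := mu_FF σ hek (E_sub A M hv K)
  have h4 : mu σ (EK A M K u) (EK A M K v) - EK A M K (mu σ u v) ∈ FF R (w + w' + K) := by
    have e1 : mu σ (EK A M K u) (EK A M K v) = ∑ ij ∈ Finset.range K ×ˢ Finset.range K,
      mu σ ((ij.1.factorial : ℚ)⁻¹ • (TT A M ^ ij.1) u) ((ij.2.factorial : ℚ)⁻¹ • (TT A M ^ ij.2) v) := by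
      rw [EK_apply, EK_apply, LinearMap.map_sum₂, Finset.sum_product]
      simp only [map_sum]
    have e2 : EK A M K (mu σ u v) = ∑ ij ∈ (Finset.range K ×ˢ Finset.range K).filter (fun ij => ij.1 + ij.2 < K),
      mu σ ((ij.1.factorial : ℚ)⁻¹ • (TT A M ^ ij.1) u) ((ij.2.factorial : ℚ)⁻¹ • (TT A M ^ ij.2) v) := by
      rw [EK_apply, Finset.sum_congr rfl (fun k _ => leib σ A M hT u v k)]
      rw [Finset.sum_sigma']
      refine Finset.sum_bij' (fun x _ => x.2) (fun ij _ => ⟨ij.1 + ij.2, ij⟩) ?_ ?_ ?_ ?_ ?_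
      · rintro ⟨k, i, j⟩ h
        simp at h ⊢
        omega
      · rintro ⟨i, j⟩ h
        simp at h ⊢
        omega
      · rintro ⟨k, i, j⟩ h
        simp at h ⊢
        omega
      · rintro ⟨i, j⟩ h
        rfl
      · rintro ⟨k, i, j⟩ h
        rfl
    rw [e1, e2, ← Finset.sum_filter_add_sum_filter_not (Finset.range K ×ˢ Finset.range K) (fun ij => ij.1 + ij.2 < K),
      add_sub_cancel_left]
    refine sum_mem fun ij h => ?_
    simp only [Finset.mem_filter, not_lt] at h
    refine FF_mono ?_ (mu_FF σ (Submodule.smul_mem _ _ (TT_pow_FF A M hu ij.1)) (Submodule.smul_mem _ _ (TT_pow_FF A M hv ij.2)))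
    have := h.2
    omega
  have h5 := sub_mem (sub_mem (sub_mem h1 (FF_mono (by omega : w + w' + K ≤ w + K + w') h2)) (FF_mono (by omega : w + w' + K ≤ w + (w' + K)) h3)) h4
  convert h5 using 1
  simp only [map_sub, LinearMap.sub_apply]
  abel

theorem E_zero (A M : ℕ → R) : E A M 0 = 0 := (EA A M).map_zero

theorem E_sum (A M : ℕ → R) (s : Finset ℤ) (f : ℤ → PV R) :
    E A M (∑ n ∈ s, f n) = ∑ n ∈ s, E A M (f n) := map_sum (EA A M) f s

theorem E_sub' (A M : ℕ → R) (u v : PV R) : E A M (u - v) = E A M u - E A M v :=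
  (EA A M).map_sub u v

theorem single_FF (n : ℤ) (r : R) : ((single n r, 0) : PV R) ∈ FF R (2 * n) := by
  refine ⟨fun m h => ?_, fun m h => by simp⟩
  exact coeff_single_of_ne (by omega)

theorem sumZ_E (A M : ℕ → R) (a : LS R) :
    slsSumZ (fun n => tf (E A M (single n (a.coeff n), 0))) = tf (E A M (a, 0)) := by
  obtain ⟨N, hN⟩ := ls_bdd a
  have key : ∀ m : ℤ, (a, (0 : LS R)) - ∑ n ∈ Finset.Ico N (m + 1), ((single n (a.coeff n), 0) : PV R)
      ∈ FF R (2 * (m + 1)) := by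
    intro m
    refine ⟨fun n h => ?_, fun n h => ?_⟩
    · simp only [Prod.fst_sub, Prod.fst_sum, coeff_sub, coeff_sum]
      rw [sub_eq_zero]
      by_cases hn : n < N
      · rw [hN n hn, Finset.sum_eq_zero]
        intro k hk
        rw [Finset.mem_Ico] at hk
        exact coeff_single_of_ne (by omega)
      · rw [Finset.sum_eq_single n]
        · simp
        · intro k _ hk
          exact coeff_single_of_ne (by omega)
        · intro h'
          rw [Finset.mem_Ico] at h'
          omega
    · simp [Prod.snd_sum]
  have key2 := fun m => E_FF A M (key m)
  simp only [E_sub', E_sum] at key2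
  have low : ∀ n, n < N → E A M (single n (a.coeff n), 0) = 0 := by
    intro n h
    rw [hN n h, single_eq_zero]
    exact E_zero A M
  have high : ∀ n, E A M (single n (a.coeff n), 0) ∈ FF R (2 * n) := fun n => E_FF A M (single_FF _ _)
  ext m
  · have h := (key2 m).1 m (by omega)
    rw [Prod.fst_sub, coeff_sub, sub_eq_zero] at h
    change _ = (E A M (a, 0)).1.coeff m
    rw [h, Prod.fst_sum, coeff_sum]
    refine finsum_eq_sum_of_support_subset _ fun n hn => ?_
    rw [Finset.coe_Ico, Set.mem_Ico]
    by_contra h'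
    apply hn
    change (E A M (single n (a.coeff n), 0)).1.coeff m = 0
    by_cases hl : n < N
    · simp [low n hl]
    · exact (high n).1 m (by omega)
  · have h := (key2 m).2 m (by omega)
    rw [Prod.snd_sub, coeff_sub, sub_eq_zero] at h
    change _ = (E A M (a, 0)).2.coeff m
    rw [h, Prod.snd_sum, coeff_sum]
    refine finsum_eq_sum_of_support_subset _ fun n hn => ?_
    rw [Finset.coe_Ico, Set.mem_Ico]
    by_contra h'
    apply hn
    change (E A M (single n (a.coeff n), 0)).2.coeff m = 0
    by_cases hl : n < N
    · simp [low n hl]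
    · exact (high n).2 m (by omega)

theorem mu_single (σ : R →+* R) (i j : ℤ) (r s : R) :
    mu σ (single i r, 0) (single j s, 0) = (single (i + j) (r * s), 0) := by
  rw [mu_apply]; simp

theorem TT_const (A M : ℕ → R) (r : R) : TT A M (single 0 r, 0) = 0 := by
  have : th (single (0 : ℤ) r) = 0 := by
    ext n
    rw [th_coeff, coeff_zero]
    by_cases h : n = 0
    · simp [h]
    · rw [coeff_single_of_ne h, smul_zero]
  rw [TT_apply]; simp [this]

theorem E_const (A M : ℕ → R) (r : R) : E A M (single 0 r, 0) = (single 0 r, 0) :=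
  E_of_TT_zero A M _ (TT_const A M r)

theorem tf_single (n : ℤ) : tf ((single n (1 : R), 0) : PV R) = (fun m => if m = n then 1 else 0, 0) := by
  ext m
  · simp [tf, coeff_single, Pi.single_apply]
  · simp [tf]

theorem tf_one : tf ((single 0 (1 : R), 0) : PV R) = slsOne := tf_single 0

theorem tf_X : tf ((single 1 (1 : R), 0) : PV R) = slsX := tf_single 1

theorem tf_Phi : tf ((0, single 0 (1 : R)) : PV R) = slsPhi := by
  ext m
  · simp [tf, slsPhi]
  · simp [tf, slsPhi, coeff_single, Pi.single_apply]

theorem smulL_tf (σ : R →+* R) (r : R) (u : PV R) :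
    slsSmulL σ r (tf u) = tf (mu σ (single 0 r, 0) u) := by
  have : sg σ (single 0 r) = single 0 (σ r) := by
    ext n
    by_cases h : n = 0
    · simp [h]
    · simp [coeff_single_of_ne h]
  ext m
  · simp [slsSmulL, tf, mu_apply]
  · simp [slsSmulL, tf, mu_apply, this]

theorem pow_E (σ : R →+* R) (A M : ℕ → R)
    (hE : ∀ u v, E A M (mu σ u v) = mu σ (E A M u) (E A M v)) (i : ℤ) (k : ℕ) :
    slsPow σ (tf (E A M (single i 1, 0))) k = tf (E A M (single (k * i) 1, 0)) := by
  induction k with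
  | zero => rw [slsPow, Nat.cast_zero, zero_mul, E_const, tf_one]
  | succ k ih =>
    rw [slsPow, ih, ← tf_mu, ← hE, mu_single]
    congr 5
    · push_cast; ring
    · simp

theorem zpow_E (σ : R →+* R) (A M : ℕ → R)
    (hE : ∀ u v, E A M (mu σ u v) = mu σ (E A M u) (E A M v)) (n : ℤ) :
    slsZPow σ (tf (E A M (single 1 1, 0))) (tf (E A M (single (-1) 1, 0))) n
      = tf (E A M (single n 1, 0)) := by
  unfold slsZPow
  split_ifs with h
  · rw [pow_E σ A M hE, show ((n.toNat : ℤ) * 1) = n by omega]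
  · rw [pow_E σ A M hE, show (((-n).toNat : ℤ) * (-1)) = n by omega]

theorem sum_E (σ : R →+* R) (A M : ℕ → R)
    (hE : ∀ u v, E A M (mu σ u v) = mu σ (E A M u) (E A M v)) (a : LS R) :
    slsSumZ (fun n => slsSmulL σ (a.coeff n)
      (slsZPow σ (tf (E A M (single 1 1, 0))) (tf (E A M (single (-1) 1, 0))) n))
      = tf (E A M (a, 0)) := by
  rw [← sumZ_E A M a]
  congr 1
  funext n
  rw [zpow_E σ A M hE, smulL_tf, ← E_const A M, ← hE, mu_single, zero_add, mul_one]

theorem tf_add (u v : PV R) : tf (u + v) = tf u + tf v := by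
  ext <;> simp [tf]

end SLSAux

/-- with `(x̃, φ̃) = (exp(T)(x), exp(T)(φ))`, the element `x̃` is invertible
in `R((x))[φ]` (with inverse `Y`), and for every `H̄ ∈ R((x))[φ]` the substitution
`H̄(x̃, φ̃)` is (coefficientwise well defined and) equal to `exp(T)(H̄)`. -/
theorem statement5
    (σ : R →+* R) (hσ : ∀ r : R, σ (σ r) = r)
    (hcomm : ∀ u v : R, σ u = u → u * v = v * u)
    (hanti : ∀ u v : R, σ u = -u → σ v = -v → u * v = -(v * u))
    (A M : ℕ → R) (hA : ∀ j, σ (A j) = A j) (hM : ∀ j, σ (M j) = -(M j)) :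
    ∃ Y : SLS R, SuppBddBelow Y.1 ∧ SuppBddBelow Y.2 ∧
      slsMul σ (slsExp A M slsX) Y = slsOne ∧
      slsMul σ Y (slsExp A M slsX) = slsOne ∧
      ∀ u : SLS R, SuppBddBelow u.1 → SuppBddBelow u.2 →
        slsSubst σ u (slsExp A M slsX) Y (slsExp A M slsPhi) = slsExp A M u := by
  have hE := SLSAux.E_mu σ A M (SLSAux.TT_mu σ hσ hcomm hanti A M hA hM)
  rw [← SLSAux.tf_X, ← SLSAux.tf_Phi, ← SLSAux.tf_E, ← SLSAux.tf_E]
  refine ⟨SLSAux.tf (SLSAux.E A M (HahnSeries.single (-1) 1, 0)), SLSAux.ls_bdd _,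
    SLSAux.ls_bdd _, ?_, ?_, ?_⟩
  · rw [← SLSAux.tf_mu, ← hE, SLSAux.mu_single, ← SLSAux.tf_one]
    rw [mul_one]
    exact congrArg _ (SLSAux.E_const A M 1)
  · rw [← SLSAux.tf_mu, ← hE, SLSAux.mu_single, ← SLSAux.tf_one]
    rw [mul_one]
    exact congrArg _ (SLSAux.E_const A M 1)
  · rintro ⟨a, b⟩ ha hb
    have h1 := SLSAux.sum_E σ A M hE (SLSAux.mk a ha)
    have h2 := SLSAux.sum_E σ A M hE (SLSAux.mk b hb)
    have h3 : ((a, b) : SLS R) = SLSAux.tf (SLSAux.mk a ha, SLSAux.mk b hb) := rfl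
    have h4 : ((SLSAux.mk a ha, SLSAux.mk b hb) : SLSAux.PV R) =
        (SLSAux.mk a ha, 0) + SLSAux.mu σ (0, HahnSeries.single 0 1) (SLSAux.mk b hb, 0) := by
      rw [SLSAux.mu_apply]
      ext1 <;> simp
    unfold slsSubst
    simp only [SLSAux.mk_coeff] at h1 h2
    rw [h1, h2, h3, h4, ← SLSAux.tf_E, SLSAux.E_add, hE, SLSAux.tf_add, SLSAux.tf_mu]

end
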